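/- arXiv:1804.00367 — 6 statements merged into one kernel-verified Lean document; each statement's English description precedes it below -/
import Mathlib

section
/- Let (G,+) be a finite abelian group, E a field of characteristic 0 or of characteristic p not dividing |G| containing a primitive N-th root of unity, where N = exp(G). Let f : G → E be a function whose Fourier transform f̂ has support equal to a coset φ·K of a subgroup K of the character group Ĝ. Then |supp(f)|·|supp(f̂)| = |G| holds if and only if there exists a ∈ G such that supp(f) = a + H, where H = K^⊥ = {x ∈ G : η(x) = 1 for all η ∈ K}, and f(x) = f(a)·φ(x − a) for all x ∈ a + H (equivalently, f = λ·φ·1_{a+H} with λ = φ(−a)f(a) ≠ 0). -/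
open Function Set

/-- The Fourier transform of `f : G → E`, `f̂(χ) = ∑_{x ∈ G} f(x) χ(-x)`. -/
def fourierTransform {G E : Type*} [AddCommGroup G] [Fintype G] [Field E]
    (f : G → E) (χ : AddChar G E) : E :=
  ∑ x, f x * χ (-x)

/-!
If `f̂` is supported in `φ·K`, then for `h ∈ K^⊥` both `x ↦ f (x + h)` and `φ h • f` have Fourier
transform `φ h • f̂`, so `f (x + h) = φ h * f x` by Fourier inversion. Hence `supp f` is a union of
cosets of `K^⊥`, on each of which `f` is a multiple of `φ`. Since `|K^⊥|·|K| = |G|`, the equality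
`|supp f|·|supp f̂| = |G|` says that `|supp f| = |K^⊥|`, that is, that `supp f` is a single coset.
-/

open scoped Pointwise

theorem ncard_eq_card_iff_exists_eq_vadd {G : Type*} [AddGroup G] {H : AddSubgroup G} [Finite H]
    {S : Set G} (hS : ∀ x ∈ S, ∀ h ∈ H, x + h ∈ S) :
    S.ncard = Nat.card H ↔ ∃ a : G, S = a +ᵥ (H : Set G) := by
  have ncard_vadd (a : G) : (a +ᵥ (H : Set G)).ncard = Nat.card H :=
    ncard_vadd_set a (H : Set G)
  refine ⟨fun hcard ↦ ?_, fun ⟨a, ha⟩ ↦ ha ▸ ncard_vadd a⟩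
  have hpos : 0 < S.ncard := hcard ▸ Nat.card_pos
  obtain ⟨a, ha⟩ := nonempty_of_ncard_ne_zero hpos.ne'
  have hsub : a +ᵥ (H : Set G) ⊆ S := by
    rintro _ ⟨h, hh, rfl⟩
    exact hS a ha h hh
  exact ⟨a, (eq_of_subset_of_ncard_le hsub (by rw [hcard, ncard_vadd])
    (finite_of_ncard_pos hpos)).symm⟩

section Duality

variable {G M : Type*} [AddCommGroup G] [CommMonoid M]

/-- Characters of `G`, viewed as homomorphisms into the units of `M`, the form in which Mathlib
states the duality of finite abelian groups. -/
def addCharMulEquivMonoidHomUnits : AddChar G M ≃* (Multiplicative G →* Mˣ) :=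
  AddChar.toMonoidHomMulEquiv.trans MonoidHom.toHomUnitsMulEquiv

@[simp]
theorem addCharMulEquivMonoidHomUnits_apply_eq_one_iff {χ : AddChar G M} {x : Multiplicative G} :
    addCharMulEquivMonoidHomUnits χ x = 1 ↔ χ x.toAdd = 1 :=
  Units.val_eq_one.symm

/-- The annihilator `K^⊥ ≤ G` of a group `K` of characters of `G`. -/
def charAnnihilator (K : Subgroup (AddChar G M)) : AddSubgroup G where
  carrier := {x | ∀ η ∈ K, η x = 1}
  zero_mem' η _ := η.map_zero_eq_one
  add_mem' hx hy η hη := by rw [η.map_add_eq_mul, hx η hη, hy η hη, one_mul]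
  neg_mem' hx η hη := hx η⁻¹ (inv_mem hη)

theorem mem_charAnnihilator {K : Subgroup (AddChar G M)} {x : G} :
    x ∈ charAnnihilator K ↔ ∀ η ∈ K, η x = 1 :=
  Iff.rfl

theorem vadd_charAnnihilator (K : Subgroup (AddChar G M)) (a : G) :
    a +ᵥ (charAnnihilator K : Set G) = {x | ∀ η ∈ K, η (x - a) = 1} := by
  ext x
  rw [mem_leftAddCoset_iff, neg_add_eq_sub, SetLike.mem_coe, mem_charAnnihilator, mem_ofPred_eq]

variable [Finite G] [HasEnoughRootsOfUnity M (AddMonoid.exponent G)]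

instance hasEnoughRootsOfUnity_exponent_multiplicative :
    HasEnoughRootsOfUnity M (Monoid.exponent (Multiplicative G)) := by
  rwa [Monoid.exponent_multiplicative]

instance finite_addChar : Finite (AddChar G M) :=
  .of_equiv _ addCharMulEquivMonoidHomUnits.symm.toEquiv

variable (G M) in
theorem natCard_addChar : Nat.card (AddChar G M) = Nat.card G :=
  (Nat.card_congr addCharMulEquivMonoidHomUnits.toEquiv).trans
    (CommGroup.card_monoidHom_of_hasEnoughRootsOfUnity (Multiplicative G) M)

variable (M) in
theorem forall_addChar_apply_eq_one_iff {x : G} : (∀ χ : AddChar G M, χ x = 1) ↔ x = 0 := by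
  have := CommGroup.forall_apply_eq_apply_iff (Multiplicative G) (M := M)
    (g := .ofAdd x) (g' := 1)
  simpa [← addCharMulEquivMonoidHomUnits.forall_congr_right] using this

theorem natCard_charAnnihilator_mul_natCard (K : Subgroup (AddChar G M)) :
    Nat.card (charAnnihilator K) * Nat.card K = Nat.card G := by
  let Φ : Subgroup (Multiplicative G →* Mˣ) := K.map addCharMulEquivMonoidHomUnits.toMonoidHom
  let H : Subgroup (Multiplicative G) :=
    (CommGroup.subgroupOrderIsoSubgroupMonoidHom _ M).symm (.toDual Φ)
  have mem_H (x : Multiplicative G) : x ∈ H ↔ x.toAdd ∈ charAnnihilator K := by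
    simp [H, Φ, mem_charAnnihilator]
  have card_K : Nat.card K = Nat.card Φ :=
    Nat.card_congr (K.equivMapOfInjective _ addCharMulEquivMonoidHomUnits.injective).toEquiv
  have card_Φ : Nat.card Φ = H.index := by
    simpa [H] using! CommGroup.card_subgroupOrderIsoSubgroupMonoidHom M H
  have card_H : Nat.card (charAnnihilator K) = Nat.card H :=
    Nat.card_congr (Multiplicative.ofAdd.subtypeEquiv fun x ↦ (mem_H (.ofAdd x)).symm)
  rw [card_K, card_Φ, card_H, H.card_mul_index]
  exact Nat.card_congr Multiplicative.toAdd

theorem sum_addChar_apply {E : Type*} [CommSemiring E] [IsDomain E]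
    [HasEnoughRootsOfUnity E (AddMonoid.exponent G)] [Fintype (AddChar G E)] [DecidableEq G]
    (x : G) :
    ∑ χ : AddChar G E, χ x = if x = 0 then (Nat.card G : E) else 0 := by
  have hx : (AddChar.doubleDualEmb x : AddChar (AddChar G E) E) = 0 ↔ x = 0 := by
    rw [AddChar.eq_zero_iff]
    exact forall_addChar_apply_eq_one_iff E
  classical
  simpa only [hx, AddChar.doubleDualEmb_apply, ← Nat.card_eq_fintype_card, natCard_addChar] using
    AddChar.sum_eq_ite (AddChar.doubleDualEmb x : AddChar (AddChar G E) E)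

end Duality

section FourierTransform

variable {G E : Type*} [AddCommGroup G] [Fintype G] [Field E]

theorem fourierTransform_const_smul (c : E) (f : G → E) :
    fourierTransform (c • f) = c • fourierTransform f := by
  ext χ
  simp only [fourierTransform, Pi.smul_apply, smul_eq_mul, mul_assoc, Finset.mul_sum]

theorem fourierTransform_comp_add_right (f : G → E) (h : G) (χ : AddChar G E) :
    fourierTransform (fun x ↦ f (x + h)) χ = χ h * fourierTransform f χ := by
  rw [fourierTransform, fourierTransform, Finset.mul_sum]
  refine Fintype.sum_equiv (Equiv.addRight h) _ _ fun x ↦ ?_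
  rw [Equiv.coe_addRight, mul_left_comm, ← χ.map_add_eq_mul, neg_add_rev, add_neg_cancel_left]

variable [HasEnoughRootsOfUnity E (AddMonoid.exponent G)]

theorem sum_fourierTransform_mul_addChar [Fintype (AddChar G E)] (f : G → E) (y : G) :
    ∑ χ, fourierTransform f χ * χ y = Fintype.card G * f y := by
  classical
  calc ∑ χ, fourierTransform f χ * χ y
      = ∑ x, f x * ∑ χ : AddChar G E, χ (y - x) := by
        simp only [fourierTransform, Finset.sum_mul, Finset.mul_sum, mul_assoc,
          ← AddChar.map_add_eq_mul, neg_add_eq_sub]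
        exact Finset.sum_comm
    _ = Fintype.card G * f y := by
        simp [sum_addChar_apply, sub_eq_zero, mul_comm]

theorem fourierTransform_injective (hchar : (Fintype.card G : E) ≠ 0) :
    Injective (fourierTransform : (G → E) → AddChar G E → E) := by
  intro f g hfg
  cases nonempty_fintype (AddChar G E)
  ext y
  refine mul_left_cancel₀ hchar ?_
  rw [← sum_fourierTransform_mul_addChar, hfg, sum_fourierTransform_mul_addChar]

theorem apply_add_of_support_fourierTransform_subset (hchar : (Fintype.card G : E) ≠ 0)
    {f : G → E} {K : Subgroup (AddChar G E)} {φ : AddChar G E}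
    (hf : support (fourierTransform f) ⊆ (φ * ·) '' (K : Set (AddChar G E)))
    {h : G} (hh : h ∈ charAnnihilator K) (x : G) : f (x + h) = φ h * f x := by
  suffices (fun x ↦ f (x + h)) = φ h • f from congrFun this x
  refine fourierTransform_injective hchar (funext fun χ ↦ ?_)
  rw [fourierTransform_comp_add_right, fourierTransform_const_smul, Pi.smul_apply, smul_eq_mul]
  obtain hχ | hχ := eq_or_ne (fourierTransform f χ) 0
  · rw [hχ, mul_zero, mul_zero]
  · obtain ⟨κ, hκ, rfl⟩ := hf hχ
    rw [AddChar.mul_apply, hh κ hκ, mul_one]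

end FourierTransform

/-- if `supp f̂` is a coset `φ·K` of a subgroup `K` of the character group,
then `|supp f|·|supp f̂| = |G|` iff `supp f` is a coset `a + H` of `H = K^⊥` and
`f(x) = f(a)·φ(x-a)` on this coset. -/
theorem stmt_0 {G E : Type*} [AddCommGroup G] [Fintype G] [Field E]
    (hchar : (Fintype.card G : E) ≠ 0)
    (hroot : ∃ ζ : E, IsPrimitiveRoot ζ (AddMonoid.exponent G))
    (f : G → E) (K : Subgroup (AddChar G E)) (φ : AddChar G E)
    (hsupp : Function.support (fourierTransform f) = (fun κ => φ * κ) '' (K : Set (AddChar G E))) :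
    (Function.support f).ncard * (Function.support (fourierTransform f)).ncard
        = Fintype.card G ↔
      ∃ a : G,
        Function.support f = {x : G | ∀ η ∈ K, η (x - a) = 1} ∧
        ∀ x : G, (∀ η ∈ K, η (x - a) = 1) → f x = f a * φ (x - a) := by
  have : NeZero (AddMonoid.exponent G) := ⟨AddMonoid.exponent_ne_zero_of_finite⟩
  have : HasEnoughRootsOfUnity E (AddMonoid.exponent G) := ⟨hroot, inferInstance⟩
  have apply_add {h : G} (hh : h ∈ charAnnihilator K) (x : G) : f (x + h) = φ h * f x :=
    apply_add_of_support_fourierTransform_subset hchar hsupp.subset hh x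
  have support_add (x : G) (hx : x ∈ support f) (h : G) (hh : h ∈ charAnnihilator K) :
      x + h ∈ support f := by
    rw [mem_support, apply_add hh]
    exact mul_ne_zero (φ.val_isUnit h).ne_zero hx
  have formula (a x : G) (hx : ∀ η ∈ K, η (x - a) = 1) : f x = f a * φ (x - a) := by
    rw [mul_comm, ← apply_add hx, add_sub_cancel]
  have ncard_dual : (support (fourierTransform f)).ncard = Nat.card K := by
    rw [hsupp, ncard_image_of_injective _ (mul_right_injective φ)]
    rfl
  rw [ncard_dual, ← Nat.card_eq_fintype_card, ← natCard_charAnnihilator_mul_natCard K,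
    Nat.mul_left_inj Nat.card_pos.ne', ncard_eq_card_iff_exists_eq_vadd support_add]
  simp only [vadd_charAnnihilator, and_iff_left (formula _)]
end

section
/- Let (G,+) be a finite abelian group, E a field, and f : G → E a nonzero function with support S = {x_1,…,x_w}. For an E-valued character χ let v(χ) = (χ(−x_1),…,χ(−x_w)) ∈ E^w, and let Z(f) = {χ : f̂(χ) = 0} denote the set of characters at which the Fourier transform of f vanishes. If A ⊆ Z(f) is a set of characters such that {v(χ) : χ ∈ A} is linearly independent over E, and η is a character with f̂(η) ≠ 0, then {v(χ) : χ ∈ A ∪ {η}} is linearly independent over E. -/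
open Function Set

/-!
The value `f̂(χ)` depends only on the restriction of `y ↦ χ (-y)` to the support of `f`, and it
depends linearly on it: `f̂(χ) = φ (v χ)` for a linear functional `φ`. This `φ` vanishes on `v χ`
for `χ ∈ A` but not on `v η`, so `v η` lies outside the span of these `v χ`.
-/

theorem linearIndepOn_union_of_map_eq_zero {R M N ι : Type*} [Ring R]
    [AddCommGroup M] [Module R M] [AddCommGroup N] [Module R N]
    (φ : M →ₗ[R] N) {v : ι → M} {s t : Set ι} (hs : LinearIndepOn R v s)
    (hφs : ∀ i ∈ s, φ (v i) = 0) (hφt : LinearIndepOn R (φ ∘ v) t) :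
    LinearIndepOn R v (s ∪ t) := by
  have hs_ker : Submodule.span R (v '' s) ≤ LinearMap.ker φ :=
    Submodule.span_le.mpr (forall_mem_image.mpr hφs)
  have ht_ker : Disjoint (Submodule.span R (v '' t)) (LinearMap.ker φ) := by
    rw [image_eq_range]
    exact Submodule.range_ker_disjoint hφt
  exact hs.union (hφt.of_comp φ) (ht_ker.symm.mono_left hs_ker)

theorem extend_comp_mul_of_support_subset_range {ι X R : Type*} [MulZeroClass R]
    {f : X → R} {x : ι → X} (hfx : support f ⊆ range x) (u : X → R) (y : X) :
    extend x (u ∘ x) 0 y * f y = u y * f y := by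
  by_cases hy : f y = 0
  · simp only [hy, mul_zero]
  · obtain ⟨i, rfl⟩ := hfx hy
    have hux : (u ∘ x).FactorsThrough x := fun _ _ h => congrArg u h
    rw [hux.extend_apply, comp_apply]

/-- The linear functional `u ↦ ∑ y, ũ y * f y`, where `ũ` extends a vector `u` of values at the
points `x i` by zero. It recovers `f̂(χ)` from the values `χ (-(x i))` when the points `x i` cover
the support of `f`. If `x` is not injective, `ũ` picks one of the coordinates of `u` at each
point. -/
noncomputable def pairingOnPoints {ι X R : Type*} [Fintype X] [Semiring R]
    (f : X → R) (x : ι → X) : (ι → R) →ₗ[R] R :=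
  Fintype.linearCombination R f ∘ₗ ExtendByZero.linearMap R x

theorem pairingOnPoints_comp {ι X R : Type*} [Fintype X] [Semiring R]
    {f : X → R} {x : ι → X} (hfx : support f ⊆ range x) (u : X → R) :
    pairingOnPoints f x (u ∘ x) = ∑ y, u y * f y :=
  Finset.sum_congr rfl fun y _ => extend_comp_mul_of_support_subset_range hfx u y

theorem pairingOnPoints_addChar {ι G E : Type*} [AddCommGroup G] [Fintype G] [Field E]
    {f : G → E} {x : ι → G} (hfx : support f ⊆ range x) (χ : AddChar G E) :
    pairingOnPoints f x (fun i => χ (-(x i))) = fourierTransform f χ :=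
  calc pairingOnPoints f x (fun i => χ (-(x i)))
    _ = ∑ y, χ (-y) * f y := pairingOnPoints_comp hfx fun y => χ (-y)
    _ = fourierTransform f χ := Finset.sum_congr rfl fun _ _ => mul_comm _ _

theorem stmt_2_general {ι G E : Type*} [AddCommGroup G] [Fintype G] [Field E]
    {f : G → E} {x : ι → G} (hfx : support f ⊆ range x) {A : Set (AddChar G E)}
    (hAZ : ∀ χ ∈ A, fourierTransform f χ = 0)
    (hA : LinearIndepOn E (fun (χ : AddChar G E) i => χ (-(x i))) A)
    {η : AddChar G E} (hη : fourierTransform f η ≠ 0) :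
    LinearIndepOn E (fun (χ : AddChar G E) i => χ (-(x i))) (A ∪ {η}) := by
  refine linearIndepOn_union_of_map_eq_zero (pairingOnPoints f x) hA (fun χ hχ => ?_)
    (LinearIndepOn.singleton ?_)
  · rw [pairingOnPoints_addChar hfx, hAZ χ hχ]
  · rwa [comp_apply, pairingOnPoints_addChar hfx]

/-- extension rule.  If `A ⊆ Z(f)` has `{v(χ) : χ ∈ A}` linearly independent
and `f̂(η) ≠ 0`, then `{v(χ) : χ ∈ A ∪ {η}}` is linearly independent, where
`v(χ) = (χ(-x₁), …, χ(-x_w))` for `supp f = {x₁, …, x_w}`. -/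
theorem stmt_2 {G E : Type*} [AddCommGroup G] [Fintype G] [Field E]
    (f : G → E) (hf : f ≠ 0)
    {w : ℕ} (x : Fin w → G) (hx : Function.Injective x)
    (hS : Function.support f = Set.range x)
    (A : Set (AddChar G E))
    (hAZ : ∀ χ ∈ A, fourierTransform f χ = 0)
    (hA : LinearIndependent E (fun χ : A => fun i : Fin w => (χ : AddChar G E) (-(x i))))
    (η : AddChar G E) (hη : fourierTransform f η ≠ 0) :
    LinearIndependent E
      (fun χ : ↥(A ∪ {η}) => fun i : Fin w => (χ : AddChar G E) (-(x i))) :=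
  stmt_2_general hS.subset hAZ hA hη
end

section
/- Let (G,+) be a finite abelian group, E a field of characteristic 0 or of characteristic p not dividing |G| containing a primitive N-th root of unity, N = exp(G), and f : G → E a nonzero function. Let N' = supp(f̂) be the support of the Fourier transform of f in the character group Ĝ. If χ_1, …, χ_t is a sequence of characters such that for each i = 2, …, t the translate χ_i·N' is not contained in (χ_1·N') ∪ … ∪ (χ_{i−1}·N'), then |supp(f)| ≥ t. -/
open Function Set

/-!
Multiplying `f` by a character translates its Fourier transform, so `χ · f` has Fourier support
`χ · N'`. A character in `χ_i · N'` outside all earlier translates gives a Fourier coefficient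
which vanishes on `χ_j · f` for `j < i` but not on `χ_i · f`. By triangularity, the functions
`χ_1 · f, …, χ_t · f` are linearly independent; all of them live on `supp f`, and the functions on
`supp f` form a space of dimension `|supp f|`.
-/

theorem linearIndependent_of_triangular_dual {ι R M : Type*} [LinearOrder ι] [Ring R]
    [NoZeroDivisors R] [AddCommGroup M] [Module R M] (v : ι → M) (φ : ι → M →ₗ[R] R)
    (hdiag : ∀ i, φ i (v i) ≠ 0) (hlt : ∀ i, ∀ j < i, φ i (v j) = 0) :
    LinearIndependent R v := by
  rw [linearIndependent_iff]
  intro c hc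
  by_contra hc0
  obtain ⟨i, hi, hmax⟩ := c.support.exists_max_image id (Finsupp.support_nonempty_iff.2 hc0)
  have combination_eq : φ i (Finsupp.linearCombination R v c) = c i * φ i (v i) := by
    rw [Finsupp.linearCombination_apply, map_finsuppSum, Finsupp.sum,
      Finset.sum_eq_single_of_mem i hi, map_smul, smul_eq_mul]
    intro j hj hji
    rw [map_smul, hlt i j (lt_of_le_of_ne (hmax j hj) hji), smul_zero]
  refine mul_ne_zero (Finsupp.mem_support_iff.1 hi) (hdiag i) ?_
  rw [← combination_eq, hc, map_zero]

theorem card_le_ncard_of_linearIndependent_of_support_subset {ι α R : Type*} [Fintype ι]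
    [Ring R] [StrongRankCondition R] {v : ι → α → R} (hv : LinearIndependent R v)
    {s : Set α} (hfin : s.Finite) (hs : ∀ i, support (v i) ⊆ s) : Fintype.card ι ≤ s.ncard := by
  have : Fintype s := hfin.fintype
  have extend_domRestrict (i : ι) :
      ExtendByZero.linearMap R ((↑) : s → α) (s.domRestrict (v i)) = v i := by
    ext x
    by_cases hx : x ∈ s
    · exact extend_val_apply hx
    · rw [ExtendByZero.linearMap_apply, extend_apply' _ _ _ (by simpa using hx), Pi.zero_apply,
        notMem_support.1 fun h => hx (hs i h)]
  have hdomRestrict : LinearIndependent R fun i => s.domRestrict (v i) :=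
    .of_comp (ExtendByZero.linearMap R ((↑) : s → α)) (by simpa only [comp_def, extend_domRestrict])
  calc
    Fintype.card ι ≤ Module.finrank R (s → R) := hdomRestrict.fintype_card_le_finrank
    _ = s.ncard := by rw [Module.finrank_fintype_fun_eq_card, fintypeCard_eq_ncard]

section FourierTransform

variable {G E : Type*} [AddCommGroup G] [Fintype G] [Field E]

/-- The Fourier coefficient at `ψ`, `f ↦ f̂(ψ)`, as a linear functional on the space of functions
`G → E`. -/
def fourierFunctional (ψ : AddChar G E) : Module.Dual E (G → E) :=
  Fintype.linearCombination E fun x => ψ (-x)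

theorem fourierFunctional_apply (ψ : AddChar G E) (f : G → E) :
    fourierFunctional ψ f = fourierTransform f ψ :=
  rfl

theorem fourierTransform_addChar_mul (χ : AddChar G E) (f : G → E) (ψ : AddChar G E) :
    fourierTransform (⇑χ * f) ψ = fourierTransform f (χ⁻¹ * ψ) := by
  refine Finset.sum_congr rfl fun x _ => ?_
  rw [Pi.mul_apply, AddChar.mul_apply, AddChar.inv_apply, neg_neg]
  ring

theorem support_fourierTransform_addChar_mul (χ : AddChar G E) (f : G → E) :
    support (fourierTransform (⇑χ * f)) = (χ * ·) '' support (fourierTransform f) := by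
  ext ψ
  rw [image_mul_left, mem_preimage, mem_support, mem_support, fourierTransform_addChar_mul]

theorem linearIndependent_addChar_mul {ι : Type*} [LinearOrder ι] {f : G → E} (hf : f ≠ 0)
    (χ : ι → AddChar G E)
    (hχ : ∀ i, ¬ IsMin i → ¬ ((χ i * ·) '' support (fourierTransform f) ⊆
      ⋃ j < i, (χ j * ·) '' support (fourierTransform f))) :
    LinearIndependent E fun i => ⇑(χ i) * f := by
  have separating (i : ι) : ∃ φ : Module.Dual E (G → E),
      φ (⇑(χ i) * f) ≠ 0 ∧ ∀ j < i, φ (⇑(χ j) * f) = 0 := by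
    by_cases hi : IsMin i
    · obtain ⟨x, hx⟩ := ne_iff.1 hf
      exact ⟨LinearMap.proj x, mul_ne_zero ((χ i).val_isUnit x).ne_zero hx,
        fun j hj => absurd hj hi.not_lt⟩
    · obtain ⟨ψ, hψi, hψ⟩ := not_subset.1 (hχ i hi)
      simp only [← support_fourierTransform_addChar_mul, mem_iUnion, mem_support, not_exists,
        not_not] at hψi hψ
      exact ⟨fourierFunctional ψ, by simpa only [fourierFunctional_apply] using ⟨hψi, hψ⟩⟩
  choose φ hdiag hlt using separating
  exact linearIndependent_of_triangular_dual _ φ hdiag hlt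

theorem stmt_3_general (f : G → E) (hf : f ≠ 0) {t : ℕ} (χ : Fin t → AddChar G E)
    (hseq : ∀ i : Fin t, 0 < i.val →
      ¬ ((fun η => χ i * η) '' support (fourierTransform f) ⊆
          ⋃ j < i, (fun η => χ j * η) '' support (fourierTransform f))) :
    t ≤ (support f).ncard := by
  have hli : LinearIndependent E fun i => ⇑(χ i) * f :=
    linearIndependent_addChar_mul hf χ fun i hi =>
      have ⟨_, hj⟩ := not_isMin_iff.1 hi
      hseq i (Nat.zero_lt_of_lt hj)
  simpa only [Fintype.card_fin] using
    card_le_ncard_of_linearIndependent_of_support_subset hli (support f).toFinite fun i =>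
      support_mul_subset_right (χ i) f

end FourierTransform

/-- if `χ₁, …, χ_t` is a sequence of characters such that each translate
`χ_i · supp f̂` is not contained in the union of the previous translates, then
`|supp f| ≥ t`. -/
theorem stmt_3 {G E : Type*} [AddCommGroup G] [Fintype G] [Field E]
    (hchar : (Fintype.card G : E) ≠ 0)
    (hroot : ∃ ζ : E, IsPrimitiveRoot ζ (AddMonoid.exponent G))
    (f : G → E) (hf : f ≠ 0)
    {t : ℕ} (χ : Fin t → AddChar G E)
    (hseq : ∀ i : Fin t, 0 < i.val →
      ¬ ((fun η => χ i * η) '' Function.support (fourierTransform f) ⊆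
          ⋃ j < i, (fun η => χ j * η) '' Function.support (fourierTransform f))) :
    t ≤ (Function.support f).ncard :=
  stmt_3_general f hf χ hseq
end

section
/- Let (K,+) be a finite abelian group, Z a proper subset of K, and N = K \ Z (so N is nonempty). Then there exists a Z-independent sequence α_1, …, α_t of distinct elements of K whose length t satisfies t·|N| ≥ |K|, i.e., t ≥ |K|/(|K| − |Z|). -/
open Function Set

/-- A sequence `α₁, …, α_t` in `K` is `Z`-independent if there are `ψ₁, …, ψ_t` in `K`
with `ψ_i + α_i ∉ Z` for all `i` and `ψ_i + α_j ∈ Z` for all `j < i`. -/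
def ZIndepSeq {K : Type*} [AddCommGroup K] (Z : Set K) {t : ℕ} (α : Fin t → K) : Prop :=
  ∃ ψ : Fin t → K, (∀ i, ψ i + α i ∉ Z) ∧ ∀ i j : Fin t, j < i → ψ i + α j ∈ Z

/-!
The translates of `N = Zᶜ` by the elements of `K` cover `K`. Thin them out to a subcover in which no
translate can be dropped: its `t` members each have `|N|` elements, so `|K| ≤ t * |N|`, and each of
them contains a point `ψ` that lies in no other member. These points witness independence, with
`ψ_i + α_j ∈ Z` for all `j ≠ i` and not only for `j < i`.
-/

theorem exists_irredundant_subcover {ι X : Type*} (s : ι → Set X) (T : Finset ι) :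
    ∃ U ⊆ T, (⋃ i ∈ U, s i = ⋃ i ∈ T, s i) ∧
      ∀ i ∈ U, ∃ x ∈ s i, ∀ j ∈ U, j ≠ i → x ∉ s j := by
  classical
  obtain ⟨U, hUT, hU⟩ := exists_minimal_le_of_wellFoundedLT
    (fun U : Finset ι ↦ ⋃ i ∈ U, s i = ⋃ i ∈ T, s i) T rfl
  refine ⟨U, hUT, hU.prop, fun i hi ↦ ?_⟩
  by_contra! h_redundant
  refine hU.not_prop_of_lt (Finset.erase_ssubset hi) (hU.prop ▸ ?_)
  refine (biUnion_subset_biUnion_left (Finset.erase_subset i U)).antisymm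
    (iUnion₂_subset fun k hk x hx ↦ ?_)
  obtain rfl | hki := eq_or_ne k i
  · obtain ⟨j, hj, hji, hxj⟩ := h_redundant x hx
    exact mem_biUnion (Finset.mem_erase.2 ⟨hji, hj⟩) hxj
  · exact mem_biUnion (Finset.mem_erase.2 ⟨hki, hk⟩) hx

section Translates

variable {G : Type*} [AddGroup G]

theorem ncard_preimage_add_right (N : Set G) (g : G) : ((· + g) ⁻¹' N).ncard = N.ncard :=
  ncard_preimage_of_injective_subset_range (add_left_injective g)
    fun n _ ↦ (AddGroup.addRight_bijective g).surjective n

theorem iUnion_preimage_add_right {N : Set G} (hN : N.Nonempty) :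
    ⋃ g : G, (· + g) ⁻¹' N = univ := by
  obtain ⟨n, hn⟩ := hN
  exact eq_univ_of_forall fun x ↦ mem_iUnion.2 ⟨-x + n, by simpa using hn⟩

theorem exists_finset_irredundant_translates [Finite G] {N : Set G} (hN : N.Nonempty) :
    ∃ U : Finset G, (∀ g ∈ U, ∃ x, x + g ∈ N ∧ ∀ h ∈ U, h ≠ g → x + h ∉ N) ∧
      Nat.card G ≤ U.card * N.ncard := by
  cases nonempty_fintype G
  obtain ⟨U, -, hU_cover, hU⟩ :=
    exists_irredundant_subcover (fun g : G ↦ (· + g) ⁻¹' N) Finset.univ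
  refine ⟨U, hU, ?_⟩
  calc Nat.card G = (⋃ g ∈ U, (· + g) ⁻¹' N).ncard := by
        simp [hU_cover, iUnion_preimage_add_right hN]
    _ ≤ ∑ g ∈ U, ((· + g) ⁻¹' N).ncard := U.set_ncard_biUnion_le _
    _ = U.card * N.ncard := by simp [ncard_preimage_add_right]

end Translates

theorem stmt_6_general {K : Type*} [AddGroup K] [Finite K] (Z : Set K) (hZ : Z ≠ univ) :
    ∃ (t : ℕ) (α ψ : Fin t → K), Injective α ∧ (∀ i, ψ i + α i ∉ Z) ∧
      (∀ i j, j ≠ i → ψ i + α j ∈ Z) ∧ Nat.card K ≤ t * Zᶜ.ncard := by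
  obtain ⟨U, hU, hcard⟩ := exists_finset_irredundant_translates (nonempty_compl.2 hZ)
  choose! ψ hψ_self hψ_other using hU
  let α (i : Fin U.card) : K := U.equivFin.symm i
  have hα_mem (i) : α i ∈ U := (U.equivFin.symm i).2
  have hα : Injective α := Subtype.val_injective.comp U.equivFin.symm.injective
  exact ⟨U.card, α, ψ ∘ α, hα, fun i ↦ hψ_self _ (hα_mem i),
    fun i j hji ↦ notMem_compl_iff.1 (hψ_other _ (hα_mem i) _ (hα_mem j) (hα.ne hji)), hcard⟩

/-- if `Z` is a proper subset of `K` and `N = K \ Z`, then there is a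
`Z`-independent sequence of distinct elements of length `t` with `t·|N| ≥ |K|`. -/
theorem stmt_6 {K : Type*} [AddCommGroup K] [Fintype K]
    (Z : Set K) (hZ : Z ≠ Set.univ) :
    ∃ (t : ℕ) (α : Fin t → K), Function.Injective α ∧ ZIndepSeq Z α ∧
      Fintype.card K ≤ t * (Zᶜ).ncard := by
  obtain ⟨t, α, ψ, hα, hψ_self, hψ_other, hcard⟩ := stmt_6_general Z hZ
  exact ⟨t, α, hα, ⟨ψ, hψ_self, fun i j hji ↦ hψ_other i j hji.ne⟩,
    Fintype.card_eq_nat_card.trans_le hcard⟩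
end

section
/- Let (K,+) be a finite abelian group, Z a proper subset of K, and N = K \ Z. Suppose that |N| divides |K| and that every Z-independent sequence of distinct elements of K has length at most |K|/|N|. Then N is a coset of a subgroup of K. -/
open Function Set

/-!
Write `N = Zᶜ`. As long as the translates `-ψ i + N` attached to an independent sequence do not
cover `K`, any element outside them can be put in front of the sequence. If the translates overlap,
their union has fewer than `t * |N|` elements, and prolonging the sequence keeps this deficit, so
that the sequence outgrows `|K| / |N|`. Hence the translates of an independent sequence are
pairwise disjoint. If `g + N` is not contained in `N`, then an element of `g + N` outside `N`,
followed by any element of `N`, is an independent sequence with translates `g + N` and `N`, which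
are therefore disjoint: `N` is a block of `K` acting on itself, that is, a coset.
-/

section

open scoped Pointwise

theorem image_add_right_stabilizer_of_isBlock {G : Type*} [AddGroup G] {B : Set G}
    (hB : AddAction.IsBlock G B) {a : G} (ha : a ∈ B) :
    (fun g => g + a) '' (AddAction.stabilizer G B : Set G) = B := by
  rw [image_eq_range]
  exact hB.orbit_stabilizer_eq ha

theorem iUnion_neg_cons_vadd {G X : Type*} [AddGroup G] [AddAction G X] {t : ℕ} (s : Set X) (p : G)
    (ψ : Fin t → G) :
    ⋃ i, -(Fin.cons p ψ : Fin (t + 1) → G) i +ᵥ s = (-p +ᵥ s) ∪ ⋃ i, -ψ i +ᵥ s := by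
  ext x
  simp only [mem_iUnion, mem_union, Fin.exists_fin_succ, Fin.cons_zero, Fin.cons_succ]

variable {K : Type*} [AddCommGroup K] {Z : Set K} {t : ℕ} {ψ α : Fin t → K}

/-- `ψ` witnesses that the sequence `α` is `Z`-independent. The translates of `Zᶜ` attached to the
witness are the sets `-ψ i +ᵥ Zᶜ`: the `i`-th contains `α i` and no earlier `α j`. -/
def IsZIndepWitness (Z : Set K) {t : ℕ} (ψ α : Fin t → K) : Prop :=
  (∀ i, ψ i + α i ∉ Z) ∧ ∀ i j : Fin t, j < i → ψ i + α j ∈ Z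

theorem IsZIndepWitness.zIndepSeq (h : IsZIndepWitness Z ψ α) : ZIndepSeq Z α :=
  ⟨ψ, h⟩

theorem ZIndepSeq.injective (h : ZIndepSeq Z α) : Injective α := by
  obtain ⟨ψ, hnotMem, hmem⟩ := h
  refine Injective.of_lt_imp_ne fun j i hji heq => hnotMem i ?_
  rw [← heq]
  exact hmem i j hji

theorem ZIndepSeq.length_le_card [Finite K] (h : ZIndepSeq Z α) : t ≤ Nat.card K := by
  simpa only [Nat.card_fin] using Nat.card_le_card_of_injective α h.injective

theorem IsZIndepWitness.cons (h : IsZIndepWitness Z ψ α) {p a : K} (hpa : p + a ∉ Z)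
    (ha : ∀ i, ψ i + a ∈ Z) :
    IsZIndepWitness Z (Fin.cons p ψ : Fin (t + 1) → K) (Fin.cons a α : Fin (t + 1) → K) := by
  refine ⟨Fin.cases hpa h.1, Fin.cases (fun j hj => absurd hj j.not_lt_zero) fun i => ?_⟩
  exact Fin.cases (fun _ => ha i) fun j hj => h.2 i j (Fin.succ_lt_succ_iff.1 hj)

theorem isZIndepWitness_pair {p a b : K} (hpa : p + a ∉ Z) (ha : a ∈ Z) (hb : b ∉ Z) :
    IsZIndepWitness Z ![p, 0] ![a, b] := by
  have hsingle : IsZIndepWitness Z ![(0 : K)] ![b] := by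
    simpa [IsZIndepWitness] using hb
  exact hsingle.cons hpa (by simpa using ha)

theorem IsZIndepWitness.exists_cons (h : IsZIndepWitness Z ψ α) (hZ : Zᶜ.Nonempty)
    (hcover : ⋃ i, -ψ i +ᵥ Zᶜ ≠ univ) :
    ∃ p a : K,
      IsZIndepWitness Z (Fin.cons p ψ : Fin (t + 1) → K) (Fin.cons a α : Fin (t + 1) → K) := by
  obtain ⟨n, hn⟩ := hZ
  obtain ⟨a, ha⟩ := (ne_univ_iff_exists_notMem _).1 hcover
  simp only [mem_iUnion, mem_neg_vadd_set_iff, vadd_eq_add, mem_compl_iff, not_exists,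
    not_not] at ha
  exact ⟨n - a, a, h.cons (by simpa using hn) ha⟩

theorem IsZIndepWitness.mul_ncard_compl_le_ncard_iUnion [Finite K] {t : ℕ} {ψ α : Fin t → K}
    (hmax : ∀ (t : ℕ) (α : Fin t → K), ZIndepSeq Z α → t * Zᶜ.ncard ≤ Nat.card K)
    (h : IsZIndepWitness Z ψ α) : t * Zᶜ.ncard ≤ (⋃ i, -ψ i +ᵥ Zᶜ).ncard := by
  by_contra! hlt
  have hZ : Zᶜ.Nonempty := nonempty_of_ncard_ne_zero fun h0 => by simp [h0] at hlt
  have hcover : ⋃ i, -ψ i +ᵥ Zᶜ ≠ univ := by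
    rw [Ne, eq_univ_iff_ncard]
    exact (hlt.trans_le (hmax t α h.zIndepSeq)).ne
  obtain ⟨p, a, hcons⟩ := h.exists_cons hZ hcover
  have hlonger := hcons.mul_ncard_compl_le_ncard_iUnion hmax
  have hunion := ncard_union_le (-p +ᵥ Zᶜ) (⋃ i, -ψ i +ᵥ Zᶜ)
  rw [iUnion_neg_cons_vadd] at hlonger
  rw [ncard_vadd_set] at hunion
  linarith
termination_by Nat.card K - t
decreasing_by exact Nat.sub_lt_sub_left hcons.zIndepSeq.length_le_card t.lt_succ_self

theorem isBlock_compl_of_mul_ncard_le [Finite K]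
    (hmax : ∀ (t : ℕ) (α : Fin t → K), ZIndepSeq Z α → t * Zᶜ.ncard ≤ Nat.card K) :
    AddAction.IsBlock K Zᶜ := by
  refine AddAction.isBlock_iff_vadd_eq_of_nonempty.2 fun g ⟨b, hgb, hb⟩ =>
    (AddAction.mem_stabilizer_set_iff_vadd_set_subset (toFinite _)).2 fun a hga => ?_
  by_contra ha
  have hpair : IsZIndepWitness Z ![-g, 0] ![a, b] :=
    isZIndepWitness_pair (mem_vadd_set_iff_neg_vadd_mem.1 hga) (not_not.1 ha) hb
  have htwo : 2 * Zᶜ.ncard ≤ ((g +ᵥ Zᶜ) ∪ Zᶜ).ncard := by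
    have hunion : ⋃ i, -(![-g, 0] : Fin 2 → K) i +ᵥ Zᶜ = (g +ᵥ Zᶜ) ∪ Zᶜ := by
      ext x
      simp [Fin.exists_fin_two]
    exact hunion ▸ hpair.mul_ncard_compl_le_ncard_iUnion hmax
  have hinter : 0 < ((g +ᵥ Zᶜ) ∩ Zᶜ).ncard := (ncard_pos).2 ⟨b, hgb, hb⟩
  have hadd := ncard_union_add_ncard_inter (g +ᵥ Zᶜ) Zᶜ
  rw [ncard_vadd_set] at hadd
  lia

theorem stmt_8_general {K : Type*} [AddCommGroup K] [Finite K] (Z : Set K) (hZ : Z ≠ Set.univ)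
    (hmax : ∀ (t : ℕ) (α : Fin t → K), Function.Injective α → ZIndepSeq Z α →
      t ≤ Nat.card K / (Zᶜ : Set K).ncard) :
    ∃ (L : AddSubgroup K) (a : K), (Zᶜ : Set K) = (fun h => a + h) '' (L : Set K) := by
  have hblock : AddAction.IsBlock K Zᶜ := isBlock_compl_of_mul_ncard_le fun t α h =>
    Nat.mul_le_of_le_div _ _ _ (hmax t α h.injective h)
  obtain ⟨a, ha⟩ := nonempty_compl.2 hZ
  refine ⟨AddAction.stabilizer K Zᶜ, a, ?_⟩
  simpa only [add_comm] using (image_add_right_stabilizer_of_isBlock hblock ha).symm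

end

/-- if `|N|` divides `|K|` and every `Z`-independent sequence of distinct
elements has length at most `|K|/|N|`, then `N = K \ Z` is a coset of a subgroup of `K`. -/
theorem stmt_8 {K : Type*} [AddCommGroup K] [Fintype K]
    (Z : Set K) (hZ : Z ≠ Set.univ)
    (hdvd : (Zᶜ : Set K).ncard ∣ Fintype.card K)
    (hmax : ∀ (t : ℕ) (α : Fin t → K), Function.Injective α → ZIndepSeq Z α →
      t ≤ Fintype.card K / (Zᶜ : Set K).ncard) :
    ∃ (L : AddSubgroup K) (a : K), (Zᶜ : Set K) = (fun h => a + h) '' (L : Set K) :=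
  stmt_8_general Z hZ (by simpa only [Nat.card_eq_fintype_card] using hmax)
end

section
/- Let (G,+) be a finite abelian group and E a field of characteristic 0 or of characteristic p not dividing |G| containing a primitive N-th root of unity, N = exp(G). Let Ĝ be the group of E-valued characters of G, let K be a subgroup of Ĝ, and let f : G → E be a function whose Fourier transform f̂ is nonzero at some character of K. Then |supp(f)| · |supp(f̂) ∩ K| ≥ |K|. -/
open Function Set

/-!
Restricted to `K`, the transform `F = f̂|_K` is a linear combination of the evaluation homomorphisms
`χ ↦ χ(-x)`, `x ∈ supp f`. A translate of a homomorphism to the multiplicative monoid of `E` is a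
scalar multiple of it, so all translates of `F` lie in one space of dimension at most `|supp f|`,
and at most `|supp f|` of them span them all. As `F ≠ 0`, every point of `K` lies in the support
of some translate, hence in the support of one of these few. The latter supports all have
`|supp F|` elements.
-/

section Translates

variable {ι H E : Type*}

theorem exists_fin_finrank_iUnion_support_eq [DivisionRing E] (S : Set (ι → E))
    [FiniteDimensional E (Submodule.span E S)] :
    ∃ b : Fin (Module.finrank E (Submodule.span E S)) → ι → E,
      (∀ j, b j ∈ S) ∧ ⋃ j, support (b j) = ⋃ g ∈ S, support g := by
  obtain ⟨b, b_mem, span_b, -⟩ := Submodule.exists_fun_fin_finrank_span_eq E S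
  refine ⟨b, b_mem, (iUnion_subset fun j ↦ subset_biUnion_of_mem (b_mem j)).antisymm ?_⟩
  refine iUnion₂_subset fun g hg i hgi ↦ ?_
  by_contra hi
  have b_apply_eq_zero : ∀ j, b j i = 0 := by simpa using hi
  have span_le_ker : Submodule.span E S ≤ LinearMap.ker (LinearMap.proj i : (ι → E) →ₗ[E] E) := by
    rw [← span_b, Submodule.span_le]
    exact range_subset_iff.2 b_apply_eq_zero
  exact hgi (span_le_ker (Submodule.subset_span hg))

theorem encard_support_comp_mul_left [Group H] [Zero E] (F : H → E) (h : H) :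
    (support fun x ↦ F (h * x)).encard = (support F).encard :=
  encard_preimage_of_bijective (Group.mulLeft_bijective h) (support F)

theorem iUnion_support_comp_mul_left [Group H] [Zero E] {F : H → E} (hF : F ≠ 0) :
    ⋃ h, support (fun x ↦ F (h * x)) = univ := by
  obtain ⟨y, hy⟩ := ne_iff.1 hF
  exact eq_univ_of_forall fun x ↦ mem_iUnion.2 ⟨y * x⁻¹, by simpa using hy⟩

theorem card_le_finrank_mul_encard_support [Group H] [DivisionRing E] {F : H → E} (hF : F ≠ 0)
    (W : Submodule E (H → E)) [FiniteDimensional E W] (hW : ∀ h, (fun x ↦ F (h * x)) ∈ W) :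
    ENat.card H ≤ Module.finrank E W * (support F).encard := by
  set T : Set (H → E) := range fun h x ↦ F (h * x) with hT
  have span_le : Submodule.span E T ≤ W := Submodule.span_le.2 (range_subset_iff.2 hW)
  have : FiniteDimensional E (Submodule.span E T) := Submodule.finiteDimensional_of_le span_le
  obtain ⟨b, b_mem, iUnion_b⟩ := exists_fin_finrank_iUnion_support_eq T
  have encard_b (j) : (support (b j)).encard = (support F).encard := by
    obtain ⟨h, hh⟩ := b_mem j
    rw [← hh, encard_support_comp_mul_left]
  calc ENat.card H
      = (⋃ j, support (b j)).encard := by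
        rw [iUnion_b, hT, biUnion_range, iUnion_support_comp_mul_left hF, encard_univ]
    _ ≤ ∑ j, (support (b j)).encard := encard_iUnion_le_of_fintype _
    _ = Module.finrank E (Submodule.span E T) * (support F).encard := by simp [encard_b]
    _ ≤ Module.finrank E W * (support F).encard := by
        gcongr
        exact Submodule.finrank_mono span_le

end Translates

section MonoidHomSpan

variable {H E : Type*} [DivisionRing E]

theorem comp_mul_left_mem_span_monoidHom [MulOneClass H] {S : Set (H →* E)} {F : H → E}
    (hF : F ∈ Submodule.span E ((⇑) '' S : Set (H → E))) (h : H) :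
    (fun x ↦ F (h * x)) ∈ Submodule.span E ((⇑) '' S : Set (H → E)) := by
  suffices Submodule.span E ((⇑) '' S) ≤
      (Submodule.span E ((⇑) '' S)).comap (LinearMap.funLeft E E (h * ·)) from this hF
  rw [Submodule.span_le]
  rintro _ ⟨φ, hφ, rfl⟩
  have translate_eq_smul : LinearMap.funLeft E E (h * ·) φ = φ h • ⇑φ := by
    ext x
    simp [LinearMap.funLeft_apply]
  rw [SetLike.mem_coe, Submodule.mem_comap, translate_eq_smul]
  exact Submodule.smul_mem _ _ (Submodule.subset_span (mem_image_of_mem _ hφ))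

theorem card_le_card_mul_encard_support_of_mem_span_monoidHom [Group H] {S : Finset (H →* E)}
    {F : H → E} (hF : F ∈ Submodule.span E ((⇑) '' (S : Set (H →* E)) : Set (H → E)))
    (hF₀ : F ≠ 0) :
    ENat.card H ≤ S.card * (support F).encard := by
  classical
  let W : Submodule E (H → E) := Submodule.span E (S.image (⇑) : Finset (H → E))
  have translate_mem (h : H) : (fun x ↦ F (h * x)) ∈ W := by
    simpa only [W, Finset.coe_image] using comp_mul_left_mem_span_monoidHom hF h
  have finrank_W_le : Module.finrank E W ≤ S.card :=
    (finrank_span_finset_le_card _).trans Finset.card_image_le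
  have : FiniteDimensional E W := FiniteDimensional.span_finset E _
  refine (card_le_finrank_mul_encard_support hF₀ W translate_mem).trans ?_
  gcongr

end MonoidHomSpan

/-- Evaluation of `M`-valued characters at `x`, as a homomorphism on the character monoid. -/
def addCharEval {G M : Type*} [AddCommMonoid G] [CommMonoid M] (x : G) : AddChar G M →* M where
  toFun χ := χ x
  map_one' := AddChar.one_apply x
  map_mul' χ ψ := AddChar.mul_apply χ ψ x

/-- The Fourier transform `χ ↦ ∑ f(x) χ(-x)` of a finitely supported function on a possibly infinite
group. -/
def finsuppFourierTransform {G E : Type*} [AddCommGroup G] [Field E] (f : G →₀ E)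
    (χ : AddChar G E) : E :=
  f.sum fun x a ↦ a * χ (-x)

theorem finsuppFourierTransform_equivFunOnFinite_symm {G E : Type*} [AddCommGroup G] [Fintype G]
    [Field E] (f : G → E) :
    finsuppFourierTransform (Finsupp.equivFunOnFinite.symm f) = fourierTransform f :=
  funext fun χ ↦ Finsupp.sum_fintype _ _ fun x ↦ zero_mul (χ (-x))

theorem finite_addChar_s9 (G E : Type*) [AddMonoid G] [Finite G] [CommRing E] [IsDomain E] :
    Finite (AddChar G E) :=
  have : Finite (Multiplicative G →* E) := (linearIndependent_monoidHom _ E).finite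
  .of_equiv _ AddChar.toMonoidHomEquiv.symm

theorem finsuppFourierTransform_restrict_mem_span {G E : Type*} [AddCommGroup G] [Field E]
    (f : G →₀ E) (K : Subgroup (AddChar G E)) :
    (fun χ : K ↦ finsuppFourierTransform f χ) ∈
      Submodule.span E ((⇑) '' ((fun x ↦ (addCharEval (-x)).comp K.subtype) '' f.support :
        Set (K →* E)) : Set (K → E)) := by
  have transform_eq_sum : (fun χ : K ↦ finsuppFourierTransform f χ) =
      ∑ x ∈ f.support, f x • ⇑((addCharEval (-x)).comp K.subtype) := by
    ext χ
    simp [finsuppFourierTransform, Finsupp.sum, addCharEval]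
  rw [transform_eq_sum]
  exact Submodule.sum_mem _ fun x hx ↦ Submodule.smul_mem _ _ <|
    Submodule.subset_span (mem_image_of_mem _ (mem_image_of_mem _ hx))

theorem stmt_9_general {G E : Type*} [AddCommGroup G] [Field E] (f : G →₀ E)
    (K : Subgroup (AddChar G E)) (hne : ∃ χ ∈ K, finsuppFourierTransform f χ ≠ 0) :
    (K : Set (AddChar G E)).encard ≤
      (support f).encard *
        (support (finsuppFourierTransform f) ∩ (K : Set (AddChar G E))).encard := by
  classical
  obtain ⟨χ, hχ, hfχ⟩ := hne
  let F : K → E := fun χ ↦ finsuppFourierTransform f χ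
  let S : Finset (K →* E) := f.support.image fun x ↦ (addCharEval (-x)).comp K.subtype
  have F_ne_zero : F ≠ 0 := ne_iff.2 ⟨⟨χ, hχ⟩, hfχ⟩
  have F_mem_span : F ∈ Submodule.span E ((⇑) '' (S : Set (K →* E)) : Set (K → E)) := by
    simpa only [S, Finset.coe_image] using finsuppFourierTransform_restrict_mem_span f K
  have encard_support_F : (support F).encard =
      (support (finsuppFourierTransform f) ∩ (K : Set (AddChar G E))).encard := by
    rw [inter_comm, ← Subtype.image_preimage_coe, Subtype.val_injective.encard_image]
    rfl
  rw [← encard_support_F, Finsupp.fun_support_eq, encard_coe_eq_coe_finsetCard]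
  refine (card_le_card_mul_encard_support_of_mem_span_monoidHom F_mem_span F_ne_zero).trans ?_
  gcongr
  exact Finset.card_image_le

/-- generalized Donoho–Stark for a subgroup `K` of the character group:
if `f̂` is nonzero at some character of `K`, then `|supp f|·|supp f̂ ∩ K| ≥ |K|`. -/
theorem stmt_9 {G E : Type*} [AddCommGroup G] [Fintype G] [Field E]
    (hchar : (Fintype.card G : E) ≠ 0)
    (hroot : ∃ ζ : E, IsPrimitiveRoot ζ (AddMonoid.exponent G))
    (f : G → E) (K : Subgroup (AddChar G E))
    (hne : ∃ χ ∈ K, fourierTransform f χ ≠ 0) :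
    (K : Set (AddChar G E)).ncard ≤
      (Function.support f).ncard *
        (Function.support (fourierTransform f) ∩ (K : Set (AddChar G E))).ncard := by
  have := finite_addChar_s9 G E
  rw [← finsuppFourierTransform_equivFunOnFinite_symm] at hne ⊢
  rw [← Nat.cast_le (α := ℕ∞), Nat.cast_mul]
  simp only [(toFinite _).cast_ncard_eq]
  exact stmt_9_general (Finsupp.equivFunOnFinite.symm f) K hne
end
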